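/- arXiv:2507.11388 — 2 statements merged into one kernel-verified Lean document; each statement's English description precedes it below -/
import Mathlib

section
/- Let p be a prime and let T be an abelian p-group (every element of T has order a power of p). Then the following are equivalent: (a) T is Bassian-finite; (b) T is co-Hopfian; (c) T is relatively co-Hopfian. -/
/-- An abelian group `G` is *Bassian-finite* if there is no injective homomorphism
from `G` into a proper direct summand of `G`. -/
def BassianFinite (G : Type*) [AddCommGroup G] : Prop :=
  ∀ A B : AddSubgroup G, IsCompl A B → B ≠ ⊥ → ∀ φ : G →+ A, ¬ Function.Injective φ

/-- An abelian group `G` is *co-Hopfian* if every injective endomorphism of `G`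
is surjective. -/
def CoHopfian (G : Type*) [AddCommGroup G] : Prop :=
  ∀ φ : G →+ G, Function.Injective φ → Function.Surjective φ

/-- An abelian group `G` is *relatively co-Hopfian* if the image of every injective
endomorphism of `G` is an essential subgroup of `G`. -/
def RelativelyCoHopfian (G : Type*) [AddCommGroup G] : Prop :=
  ∀ φ : G →+ G, Function.Injective φ → ∀ B : AddSubgroup G, B ≠ ⊥ → φ.range ⊓ B ≠ ⊥

/-!
Let `φ` be an injective endomorphism of a `p`-group `G`, and let `V n` be the group `(p ^ n G)[p]`.
A subgroup of `V m` meeting `V (m + 1)` trivially is the socle of a direct summand of `G` that is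
a direct sum of copies of `ℤ/p^(m+1)`. If `G` is Bassian-finite then the image of `φ` meets every
nonzero summand, since otherwise `φ` followed by a projection would embed `G` in the complement.
Hence the image contains every element of `V 0` of finite height, and so all of `V 0` unless `G` is
divisible, in which case the image of `φ` is itself a summand. Moreover no infinite direct power is
a summand of `G`, so `V n / V (n + 1)` is finite. As `φ` is injective and maps `V (n + 1)` into
itself, `φ (V n) = V n` gives `φ (V (n + 1)) = V (n + 1)` by comparing indices. Thus `φ` preserves
all `V n`, and induction on the order of an element shows that it is surjective.
-/

section

variable {G F ι : Type*} [AddCommGroup G] [AddCommGroup F]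

theorem CoHopfian.relativelyCoHopfian (hG : CoHopfian G) : RelativelyCoHopfian G := by
  intro φ hφ B hB
  rwa [AddMonoidHom.range_eq_top.2 (hG φ hφ), top_inf_eq]

theorem RelativelyCoHopfian.bassianFinite (hG : RelativelyCoHopfian G) : BassianFinite G := by
  intro A B hAB hB φ hφ
  refine hG (A.subtype.comp φ) (A.subtype_injective.comp hφ) B hB (disjoint_iff.1 ?_)
  refine hAB.disjoint.mono_left ?_
  rintro _ ⟨x, rfl⟩
  exact (φ x).2

section Retract

variable {r : G →+ F} {g : F →+ G}

theorem isCompl_ker_range_of_leftInverse (h : Function.LeftInverse r g) :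
    IsCompl r.ker g.range := by
  constructor
  · rw [AddSubgroup.disjoint_def]
    rintro _ hf ⟨f, rfl⟩
    rw [← h f, AddMonoidHom.mem_ker.1 hf, map_zero]
  · rw [codisjoint_iff, eq_top_iff]
    intro x _
    exact AddSubgroup.mem_sup.2
      ⟨x - g (r x), by simp [AddMonoidHom.mem_ker, h (r x)], g (r x), ⟨r x, rfl⟩, by simp⟩

theorem exists_leftInverse_of_isCompl_range {A : AddSubgroup G} (hg : Function.Injective g)
    (hA : IsCompl A g.range) : ∃ r : G →+ F, Function.LeftInverse r g := by
  let s : A × F →+ G := A.subtype.coprod g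
  have s_injective : Function.Injective s := by
    rw [injective_iff_map_eq_zero]
    rintro ⟨a, f⟩ (haf : (a : G) + g f = 0)
    have ha : (a : G) = 0 := AddSubgroup.disjoint_def.1 hA.disjoint a.2
      (eq_neg_of_add_eq_zero_left haf ▸ g.range.neg_mem ⟨f, rfl⟩)
    have hf : g f = 0 := by rwa [ha, zero_add] at haf
    exact Prod.ext (Subtype.ext ha) ((injective_iff_map_eq_zero g).1 hg f hf)
  have s_surjective : Function.Surjective s := by
    intro x
    obtain ⟨a, ha, _, ⟨f, rfl⟩, hx⟩ := AddSubgroup.mem_sup.1 (hA.sup_eq_top ▸ AddSubgroup.mem_top x)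
    exact ⟨(⟨a, ha⟩, f), hx⟩
  let e : A × F ≃+ G := AddEquiv.ofBijective s ⟨s_injective, s_surjective⟩
  refine ⟨(AddMonoidHom.snd A F).comp e.symm.toAddMonoidHom, fun f => ?_⟩
  have hf : e (0, f) = g f := (congrArg (· + g f) (map_zero A.subtype)).trans (zero_add _)
  simp [← hf]

/-- The injective endomorphism followed by the projection along the summand cannot be injective. -/
theorem BassianFinite.not_disjoint_range [Nontrivial F] (hG : BassianFinite G)
    (h : Function.LeftInverse r g) {φ : G →+ G} (hφ : Function.Injective φ) :
    ¬ Disjoint φ.range g.range := by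
  intro hd
  have hrange : g.range ≠ ⊥ := by
    obtain ⟨f, hf⟩ := exists_ne (0 : F)
    exact fun hbot => hf (h.injective (by simpa using g.range_eq_bot_iff.1 hbot ▸ rfl))
  let π : G →+ r.ker := (AddMonoidHom.id G - g.comp r).codRestrict r.ker
    fun x => by simp [AddMonoidHom.mem_ker, h (r x)]
  refine hG r.ker g.range (isCompl_ker_range_of_leftInverse h) hrange (π.comp φ) ?_
  rw [injective_iff_map_eq_zero]
  intro x hx
  have hφx : φ x = g (r (φ x)) := sub_eq_zero.1 (congrArg Subtype.val hx)
  exact (injective_iff_map_eq_zero φ).1 hφ x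
    (AddSubgroup.disjoint_def.1 hd ⟨x, rfl⟩ ⟨r (φ x), hφx.symm⟩)

theorem BassianFinite.surjective_of_leftInverse (hG : BassianFinite G)
    (h : Function.LeftInverse r g) (φ : G →+ F) (hφ : Function.Injective φ) :
    Function.Surjective g := by
  have hcompl := (isCompl_ker_range_of_leftInverse h).symm
  have hker : r.ker = ⊥ := by
    by_contra hker
    exact hG g.range r.ker hcompl hker (g.rangeRestrict.comp φ)
      ((g.rangeRestrict_injective_iff.2 h.injective).comp hφ)
  rw [← AddMonoidHom.range_eq_top, ← hcompl.sup_eq_top, hker, sup_bot_eq]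

/-- Shifting the coordinates of an infinite direct sum of copies of `M` would be an injection
missing one of them. -/
theorem BassianFinite.finite_of_leftInverse_finsupp {M : Type*} [AddCommGroup M] [Nontrivial M]
    (hG : BassianFinite G) {r : G →+ (ι →₀ M)} {g : (ι →₀ M) →+ G}
    (h : Function.LeftInverse r g) : Finite ι := by
  by_contra hι
  rw [not_finite_iff_infinite] at hι
  obtain ⟨e⟩ : Nonempty (Option ι ≃ ι) := Cardinal.eq.1 (by
    rw [Cardinal.mk_option, Cardinal.add_one_eq (Cardinal.aleph0_le_mk ι)])
  have shift_injective : Function.Injective (fun i => e (some i)) :=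
    e.injective.comp (Option.some_injective ι)
  let shift : (ι →₀ M) →+ (ι →₀ M) := Finsupp.mapDomain.addMonoidHom fun i => e (some i)
  have shift_none (f : ι →₀ M) : shift f (e none) = 0 :=
    Finsupp.mapDomain_of_notMem_range f _ (by simp)
  let φ : G →+ G := AddMonoidHom.id G - g.comp r + g.comp (shift.comp r)
  have r_φ (x : G) : r (φ x) = shift (r x) := by simp [φ, h _]
  have hφ : Function.Injective φ := by
    rw [injective_iff_map_eq_zero]
    intro x hx
    have hrx : r x = 0 := by
      refine (injective_iff_map_eq_zero shift).1 (Finsupp.mapDomain_injective shift_injective) _ ?_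
      rw [← r_φ, hx, map_zero]
    simpa [φ, hrx] using hx
  have hretract : Function.LeftInverse ((Finsupp.applyAddHom (e none)).comp r)
      (g.comp (Finsupp.singleAddHom (e none))) := fun a => by simp [h _]
  refine hG.not_disjoint_range hretract hφ (AddSubgroup.disjoint_def.2 ?_)
  rintro _ ⟨x, rfl⟩ ⟨a, ha : g (Finsupp.single (e none) a) = φ x⟩
  have hx : shift (r x) = Finsupp.single (e none) a := by rw [← r_φ, ← ha, h]
  have ha0 : a = 0 := by simpa [shift_none] using (DFunLike.congr_fun hx (e none)).symm
  rw [← ha, ha0, Finsupp.single_zero, map_zero]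

end Retract

theorem map_eq_of_relIndex_ne_zero {φ : G →+ G} (hφ : Function.Injective φ) {U W : AddSubgroup G}
    (hW : W.map φ = W) (hUW : U ≤ W) (hU : U.map φ ≤ U) (hindex : U.relIndex W ≠ 0) :
    U.map φ = U := by
  refine le_antisymm hU (AddSubgroup.relIndex_eq_one.1 ?_)
  have hmap : (U.map φ).relIndex W = U.relIndex W := by
    conv_lhs => rw [← hW]
    exact AddSubgroup.relIndex_map_map_of_injective U W hφ
  have hmul := AddSubgroup.relIndex_mul_relIndex _ _ _ hU hUW
  rw [hmap] at hmul
  exact (mul_eq_right₀ hindex).1 hmul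

section Primary

variable {p m : ℕ}

theorem exists_addEquiv_finsupp_zmod (hp : p.Prime) (hG : ∀ x : G, p • x = 0) :
    ∃ s : Set G, Nonempty ((s →₀ ZMod p) ≃+ G) := by
  have := Fact.mk hp
  let _ : Module (ZMod p) G := AddCommGroup.zmodModule hG
  exact ⟨_, ⟨(Module.Basis.ofVectorSpace (ZMod p) G).repr.symm.toAddEquiv⟩⟩

theorem exists_nsmul_eq_of_mapRange_castHom_eq_zero {d n : ℕ} (h : d ∣ n) {f : ι →₀ ZMod n}
    (hf : Finsupp.mapRange.addMonoidHom (ZMod.castHom h (ZMod d)).toAddMonoidHom f = 0) :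
    ∃ f', d • f' = f := by
  have hdvd (i : ι) : (d : ℤ) ∣ (f i).cast := by
    rw [← ZMod.intCast_zmod_eq_zero_iff_dvd, ZMod.intCast_cast]
    exact DFunLike.congr_fun hf i
  refine ⟨f.mapRange (fun a => ((a.cast / d : ℤ) : ZMod n)) (by simp), Finsupp.ext fun i => ?_⟩
  rw [Finsupp.smul_apply, Finsupp.mapRange_apply, nsmul_eq_mul]
  exact_mod_cast (congrArg (Int.cast (R := ZMod n)) (Int.mul_ediv_cancel' (hdvd i))).trans
    (ZMod.intCast_zmod_cast (f i))

theorem mem_of_nsmul_mem_of_zsmul_mem (hp : p.Prime) {S : AddSubgroup G} {x : G}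
    (hx : p • x ∈ S) {k : ℤ} (hk : ¬ (p : ℤ) ∣ k) (hkx : k • x ∈ S) : x ∈ S := by
  obtain ⟨a, b, hab⟩ := (Nat.prime_iff_prime_int.1 hp).coprime_iff_not_dvd.2 hk
  rw [← one_smul ℤ x, ← hab, add_smul, mul_smul, mul_smul, natCast_zsmul]
  exact S.add_mem (S.zsmul_mem hx a) (S.zsmul_mem hkx b)

theorem disjoint_zmultiples_of_notMem (hp : p.Prime) {S : AddSubgroup G} {y : G} (hy : p • y = 0)
    (hyS : y ∉ S) : Disjoint (AddSubgroup.zmultiples y) S := by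
  rw [AddSubgroup.disjoint_def]
  rintro _ ⟨k, rfl⟩ hkS
  by_cases hk : (p : ℤ) ∣ k
  · obtain ⟨l, rfl⟩ := hk
    simp only [mul_comm (p : ℤ), mul_smul, natCast_zsmul, hy, smul_zero]
  · exact absurd (mem_of_nsmul_mem_of_zsmul_mem hp (hy ▸ S.zero_mem) hk hkS) hyS

theorem exists_maximal_disjoint {K C : AddSubgroup G} (hKC : Disjoint K C) :
    ∃ A, K ≤ A ∧ Maximal (Disjoint · C) A := by
  refine zorn_le_nonempty₀ {A | Disjoint A C} (fun c hc hchain A hA => ?_) K hKC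
  refine ⟨sSup c, AddSubgroup.disjoint_def.2 fun {x} hx hxC => ?_, fun _ => le_sSup⟩
  obtain ⟨B, hB, hxB⟩ := (AddSubgroup.mem_sSup_of_directedOn ⟨A, hA⟩ hchain.directedOn).1 hx
  exact AddSubgroup.disjoint_def.1 (hc hB) hxB hxC

theorem mem_sup_of_nsmul_mem_of_maximal_disjoint (hp : p.Prime) {A C : AddSubgroup G}
    (hA : Maximal (Disjoint · C) A) {y : G} (hy : p • y ∈ A) : y ∈ A ⊔ C := by
  by_contra hyAC
  have hnot_disjoint : ¬ Disjoint (A ⊔ AddSubgroup.zmultiples y) C := fun hd =>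
    hyAC (AddSubgroup.mem_sup_left (hA.le_of_ge hd le_sup_left
      (AddSubgroup.mem_sup_right (AddSubgroup.mem_zmultiples y))))
  refine hnot_disjoint (AddSubgroup.disjoint_def.2 fun {d} hd hdC => ?_)
  obtain ⟨a, ha, _, ⟨k, rfl⟩, rfl⟩ := AddSubgroup.mem_sup.1 hd
  by_cases hk : (p : ℤ) ∣ k
  · obtain ⟨l, rfl⟩ := hk
    refine AddSubgroup.disjoint_def.1 hA.prop (A.add_mem ha ?_) hdC
    simpa only [mul_comm (p : ℤ), mul_smul, natCast_zsmul] using A.zsmul_mem hy l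
  · refine absurd (mem_of_nsmul_mem_of_zsmul_mem hp (AddSubgroup.mem_sup_left hy) hk ?_) hyAC
    simpa using (A ⊔ C).sub_mem (AddSubgroup.mem_sup_right hdC) (AddSubgroup.mem_sup_left ha)

theorem eq_top_of_forall_nsmul_mem (hG : ∀ x : G, ∃ n : ℕ, p ^ n • x = 0) {S : AddSubgroup G}
    (hS : ∀ x, p • x ∈ S → x ∈ S) : S = ⊤ := by
  refine (AddSubgroup.eq_top_iff' S).2 fun x => ?_
  obtain ⟨n, hn⟩ := hG x
  induction n generalizing x with
  | zero =>
    obtain rfl : x = 0 := by simpa using hn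
    exact S.zero_mem
  | succ n ih => exact hS x (ih (p • x) (by rwa [smul_smul, ← pow_succ]))

theorem exists_isCompl_of_forall_nsmul_eq_add (hp : p.Prime)
    (hG : ∀ x : G, ∃ n : ℕ, p ^ n • x = 0) {K C : AddSubgroup G} (hKC : Disjoint K C)
    (hC : ∀ A, K ≤ A → Disjoint A C → ∀ x, ∀ a ∈ A, ∀ c ∈ C, p • x = a + c →
      ∃ c' ∈ C, p • c' = c) :
    ∃ A, IsCompl A C := by
  obtain ⟨A, hKA, hA⟩ := exists_maximal_disjoint hKC
  refine ⟨A, hA.prop, codisjoint_iff.2 (eq_top_of_forall_nsmul_mem hG fun x hx => ?_)⟩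
  obtain ⟨a, ha, c, hc, hac⟩ := AddSubgroup.mem_sup.1 hx
  obtain ⟨c', hc', rfl⟩ := hC A hKA hA.prop x a ha c hc hac.symm
  have hx' : x - c' ∈ A ⊔ C := mem_sup_of_nsmul_mem_of_maximal_disjoint hp hA (by
    rwa [smul_sub, ← hac, add_sub_cancel_right])
  simpa using (A ⊔ C).add_mem hx' (AddSubgroup.mem_sup_right hc')

theorem exists_disjoint_sup_eq_of_nsmul_eq_zero (hp : p.Prime) {U W : AddSubgroup G}
    (hW : ∀ x ∈ W, p • x = 0) (hUW : U ≤ W) : ∃ X, Disjoint X U ∧ X ⊔ U = W := by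
  have hpW (x : W) : p • x = 0 := Subtype.ext (hW x x.2)
  obtain ⟨X, hX⟩ : ∃ X, IsCompl X (U.addSubgroupOf W) :=
    exists_isCompl_of_forall_nsmul_eq_add hp (fun x => ⟨1, by rw [pow_one, hpW]⟩)
      disjoint_bot_left (by
        intro A _ hAU x a ha c hc hx
        have hca : c = -a := eq_neg_of_add_eq_zero_right (by rw [← hx, hpW])
        exact ⟨0, zero_mem _, by
          rw [smul_zero, AddSubgroup.disjoint_def.1 hAU (hca ▸ A.neg_mem ha) hc]⟩)
  have hU : (U.addSubgroupOf W).map W.subtype = U := AddSubgroup.map_addSubgroupOf_eq_of_le hUW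
  refine ⟨X.map W.subtype, ?_, ?_⟩
  · rw [← hU]
    exact AddSubgroup.disjoint_map W.subtype_injective hX.disjoint
  · rw [← hU, ← AddSubgroup.map_sup, hX.sup_eq_top, ← AddMonoidHom.range_eq_map,
      AddSubgroup.range_subtype]

theorem eq_bot_of_forall_nsmul_eq_zero (hG : ∀ x : G, ∃ n : ℕ, p ^ n • x = 0) {S : AddSubgroup G}
    (hS : ∀ x ∈ S, p • x = 0 → x = 0) : S = ⊥ := by
  rw [AddSubgroup.eq_bot_iff_forall]
  intro x hx
  obtain ⟨n, hn⟩ := hG x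
  induction n generalizing x with
  | zero => simpa using hn
  | succ n ih =>
    exact hS x hx (ih (p • x) (S.nsmul_mem hx p) (by rwa [smul_smul, ← pow_succ]))

theorem surjective_of_forall_nsmul_eq_zero (hG : ∀ x : G, ∃ n : ℕ, p ^ n • x = 0) (φ : F →+ G)
    (hφ : ∀ (n : ℕ) (x : G), p • p ^ n • x = 0 → ∃ u, φ (p ^ n • u) = p ^ n • x) :
    Function.Surjective φ := by
  intro x
  obtain ⟨n, hn⟩ := hG x
  induction n generalizing x with
  | zero => exact ⟨0, by simpa using hn.symm⟩
  | succ n ih =>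
    obtain ⟨u, hu⟩ := hφ n x (by rwa [smul_smul, ← pow_succ'])
    obtain ⟨v, hv⟩ := ih (x - φ u) (by rw [smul_sub, ← map_nsmul, hu, sub_self])
    exact ⟨v + u, by rw [map_add, hv, sub_add_cancel]⟩

theorem exists_pow_nsmul_eq_of_nsmul_eq_zero
    (hF : ∀ f : F, p ^ m • f = 0 → ∃ f', p • f' = f) {f : F} (hf : p • f = 0) :
    ∃ f', p ^ m • f' = f := by
  suffices h : ∀ k ≤ m, ∃ f', p ^ k • f' = f from h m le_rfl
  intro k hk
  induction k with
  | zero => exact ⟨f, by simp⟩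
  | succ k ih =>
    obtain ⟨d, hd⟩ := ih (by lia)
    have hpd : p ^ m • d = 0 := by
      obtain ⟨j, rfl⟩ := Nat.exists_eq_add_of_lt hk
      rw [show k + j + 1 = j + 1 + k by lia, pow_add, mul_smul, hd, pow_succ, mul_smul, hf,
        smul_zero]
    obtain ⟨d', rfl⟩ := hF d hpd
    exact ⟨d', by rw [pow_succ, mul_smul, hd]⟩

/-- The hypotheses say that `F` is a direct sum of copies of `ℤ/p^(m+1)`, embedded by `g` as a pure
subgroup. -/
theorem exists_leftInverse_of_pow_nsmul (hp : p.Prime) (hG : ∀ x : G, ∃ n : ℕ, p ^ n • x = 0)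
    (g : F →+ G) (hF : ∀ f : F, p ^ (m + 1) • f = 0)
    (hg : ∀ f x, p ^ m • g f = p ^ (m + 1) • x → ∃ f', p • f' = f) :
    ∃ r : G →+ F, Function.LeftInverse r g := by
  have hF_dvd (f : F) (hf : p ^ m • f = 0) : ∃ f', p • f' = f :=
    hg f 0 (by rw [← map_nsmul, hf, map_zero, smul_zero])
  let K : AddSubgroup G := (nsmulAddMonoidHom (p ^ (m + 1))).range
  have hcomap : K.comap g = ⊥ := by
    refine eq_bot_of_forall_nsmul_eq_zero (fun f => ⟨m + 1, hF f⟩) ?_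
    rintro f ⟨x, hx⟩ hf
    obtain ⟨f', rfl⟩ := exists_pow_nsmul_eq_of_nsmul_eq_zero hF_dvd hf
    obtain ⟨f'', rfl⟩ := hg f' x (by rw [← map_nsmul]; exact hx.symm)
    rw [smul_smul, ← pow_succ, hF]
  have hK (f : F) (hf : g f ∈ K) : f = 0 := (AddSubgroup.eq_bot_iff_forall _).1 hcomap f hf
  have g_injective : Function.Injective g :=
    (injective_iff_map_eq_zero g).2 fun f hf => hK f (hf ▸ K.zero_mem)
  have hd : Disjoint K g.range := by
    rw [AddSubgroup.disjoint_def]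
    rintro _ hf ⟨f, rfl⟩
    rw [hK f hf, map_zero]
  obtain ⟨A, hA⟩ := exists_isCompl_of_forall_nsmul_eq_add hp hG hd (by
    rintro A hKA hAg x a ha _ ⟨f, rfl⟩ hx
    have hfA : p ^ m • g f ∈ A := by
      rw [eq_sub_of_add_eq' hx.symm, smul_sub, smul_smul, ← pow_succ]
      exact A.sub_mem (hKA ⟨x, rfl⟩) (A.nsmul_mem ha _)
    have hf0 : p ^ m • g f = 0 :=
      AddSubgroup.disjoint_def.1 hAg hfA (g.range.nsmul_mem ⟨f, rfl⟩ _)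
    obtain ⟨f', rfl⟩ := hg f 0 (by rw [hf0, smul_zero])
    exact ⟨g f', ⟨f', rfl⟩, (map_nsmul g p f').symm⟩)
  exact exists_leftInverse_of_isCompl_range g_injective hA

theorem exists_leftInverse_of_surjective_nsmul (hp : p.Prime)
    (hG : ∀ x : G, ∃ n : ℕ, p ^ n • x = 0) {g : F →+ G} (hg : Function.Injective g)
    (hF : Function.Surjective fun f : F => p • f) : ∃ r : G →+ F, Function.LeftInverse r g := by
  obtain ⟨A, hA⟩ := exists_isCompl_of_forall_nsmul_eq_add hp hG
    (disjoint_bot_left (a := g.range)) (by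
      rintro - - - - - - _ ⟨f, rfl⟩ -
      obtain ⟨f', rfl⟩ := hF f
      exact ⟨g f', ⟨f', rfl⟩, (map_nsmul g p f').symm⟩)
  exact exists_leftInverse_of_isCompl_range hg hA

/-- The subgroup `(p ^ n G)[p]`, consisting of the elements of the socle `G[p]` whose `p`-height
in `G` is at least `n`. -/
def socleFiltration (p : ℕ) (G : Type*) [AddCommGroup G] (n : ℕ) : AddSubgroup G :=
  AddSubgroup.torsionBy G p ⊓ (nsmulAddMonoidHom (p ^ n)).range

theorem mem_socleFiltration {n : ℕ} {y : G} :
    y ∈ socleFiltration p G n ↔ p • y = 0 ∧ ∃ x, p ^ n • x = y :=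
  and_congr_left' AddSubgroup.torsionBy.nsmul_iff

theorem mem_socleFiltration_zero {y : G} : y ∈ socleFiltration p G 0 ↔ p • y = 0 := by
  simp [mem_socleFiltration]

theorem socleFiltration_succ_le (n : ℕ) :
    socleFiltration p G (n + 1) ≤ socleFiltration p G n := by
  intro y hy
  obtain ⟨hpy, x, rfl⟩ := mem_socleFiltration.1 hy
  exact mem_socleFiltration.2 ⟨hpy, p • x, by rw [smul_smul, ← pow_succ]⟩

theorem map_socleFiltration_le (φ : G →+ F) (n : ℕ) :
    (socleFiltration p G n).map φ ≤ socleFiltration p F n := by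
  rintro _ ⟨y, hy, rfl⟩
  obtain ⟨hpy, x, rfl⟩ := mem_socleFiltration.1 hy
  exact mem_socleFiltration.2
    ⟨by rw [← map_nsmul, hpy, map_zero], φ x, (map_nsmul φ (p ^ n) x).symm⟩

theorem exists_lift_finsupp_zmod_pow (e : (ι →₀ ZMod p) →+ G)
    (he : ∀ c, e c ∈ socleFiltration p G m) :
    ∃ g : (ι →₀ ZMod (p ^ (m + 1))) →+ G, ∀ f, p ^ m • g f =
      e (Finsupp.mapRange.addMonoidHom
        (ZMod.castHom (dvd_pow_self p m.succ_ne_zero) (ZMod p)).toAddMonoidHom f) := by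
  choose hpe z hz using fun i => mem_socleFiltration.1 (he (Finsupp.single i 1))
  have hpz (i : ι) : p ^ (m + 1) • z i = 0 := by rw [pow_succ', mul_smul, hz, hpe]
  let g : (ι →₀ ZMod (p ^ (m + 1))) →+ G := Finsupp.liftAddHom fun i =>
    ZMod.lift _ ⟨zmultiplesHom G (z i), (natCast_zsmul _ _).trans (hpz i)⟩
  refine ⟨g, fun f => DFunLike.congr_fun (?_ : (nsmulAddMonoidHom (p ^ m)).comp g = e.comp _) f⟩
  refine Finsupp.addHom_ext fun i a => ?_
  obtain ⟨k, rfl⟩ := ZMod.intCast_surjective a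
  have hk : Finsupp.single i (k : ZMod p) = k • Finsupp.single i 1 := by simp
  calc
    p ^ m • g (Finsupp.single i k) = p ^ m • k • z i := by simp [g]
    _ = e (Finsupp.single i (k : ZMod p)) := by rw [smul_comm, hz, hk, map_zsmul]
    _ = _ := by simp

theorem exists_leftInverse_of_le_socleFiltration (hp : p.Prime)
    (hG : ∀ x : G, ∃ n : ℕ, p ^ n • x = 0) {X : AddSubgroup G}
    (hX : X ≤ socleFiltration p G m) (hd : Disjoint X (socleFiltration p G (m + 1))) :
    ∃ (s : Set X) (g : (s →₀ ZMod (p ^ (m + 1))) →+ G) (r : G →+ (s →₀ ZMod (p ^ (m + 1)))),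
      Function.LeftInverse r g ∧ g.range ⊓ socleFiltration p G 0 = X := by
  have hpX (x : X) : p • x = 0 := Subtype.ext (mem_socleFiltration.1 (hX x.2)).1
  obtain ⟨s, ⟨e⟩⟩ := exists_addEquiv_finsupp_zmod hp hpX
  obtain ⟨g, hg⟩ := exists_lift_finsupp_zmod_pow (X.subtype.comp e.toAddMonoidHom)
    fun c => hX (e c).2
  have hg_dvd (f) (x : G) (hfx : p ^ m • g f = p ^ (m + 1) • x) : ∃ f', p • f' = f := by
    rw [hg] at hfx
    have he0 := AddSubgroup.disjoint_def.1 hd (e _).2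
      (mem_socleFiltration.2 ⟨congrArg Subtype.val (hpX (e _)), x, hfx.symm⟩)
    exact exists_nsmul_eq_of_mapRange_castHom_eq_zero _ (e.map_eq_zero_iff.1 (Subtype.ext he0))
  obtain ⟨r, hr⟩ := exists_leftInverse_of_pow_nsmul hp hG g
    (fun f => by ext; simp [-Nat.cast_pow, nsmul_eq_mul]) hg_dvd
  refine ⟨s, g, r, hr, le_antisymm ?_ (le_inf (fun x hx => ?_) fun x hx => ?_)⟩
  · rintro _ ⟨⟨f, rfl⟩, hf⟩
    obtain ⟨f', rfl⟩ := exists_pow_nsmul_eq_of_nsmul_eq_zero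
      (fun f hf => hg_dvd f 0 (by rw [← map_nsmul, hf, map_zero, smul_zero]))
      (hr.injective (by rw [map_nsmul, mem_socleFiltration_zero.1 hf, map_zero]))
    rw [map_nsmul, hg]
    exact (e _).2
  · obtain ⟨f, hf⟩ := Finsupp.mapRange_surjective _ (map_zero _)
      (ZMod.castHom_surjective (dvd_pow_self p m.succ_ne_zero)) (e.symm ⟨x, hx⟩)
    refine ⟨p ^ m • f, ?_⟩
    rw [map_nsmul, hg]
    exact congrArg Subtype.val ((congrArg e hf).trans (e.apply_symm_apply _))
  · exact mem_socleFiltration_zero.2 (mem_socleFiltration.1 (hX hx)).1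

namespace BassianFinite

theorem finite_of_disjoint_socleFiltration (hB : BassianFinite G) (hp : p.Prime)
    (hG : ∀ x : G, ∃ n : ℕ, p ^ n • x = 0) {X : AddSubgroup G}
    (hX : X ≤ socleFiltration p G m) (hd : Disjoint X (socleFiltration p G (m + 1))) :
    Finite X := by
  obtain ⟨s, g, r, hr, hgX⟩ := exists_leftInverse_of_le_socleFiltration hp hG hX hd
  have : Fact (1 < p ^ (m + 1)) := ⟨Nat.one_lt_pow m.succ_ne_zero hp.one_lt⟩
  have : Finite s := hB.finite_of_leftInverse_finsupp hr
  have : NeZero (p ^ (m + 1)) := ⟨pow_ne_zero _ hp.ne_zero⟩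
  have : Finite (s →₀ ZMod (p ^ (m + 1))) := Finite.of_injective _ DFunLike.coe_injective
  exact (Set.finite_range g).subset (hgX.ge.trans inf_le_left)

theorem not_disjoint_range_of_le_socleFiltration (hB : BassianFinite G) (hp : p.Prime)
    (hG : ∀ x : G, ∃ n : ℕ, p ^ n • x = 0) {φ : G →+ G} (hφ : Function.Injective φ)
    {X : AddSubgroup G} (hX0 : X ≠ ⊥) (hX : X ≤ socleFiltration p G m)
    (hd : Disjoint X (socleFiltration p G (m + 1))) : ¬ Disjoint φ.range X := by
  intro hφX
  obtain ⟨s, g, r, hr, hgX⟩ := exists_leftInverse_of_le_socleFiltration hp hG hX hd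
  have hF : Nontrivial (s →₀ ZMod (p ^ (m + 1))) := by
    rw [← not_subsingleton_iff_nontrivial]
    intro _
    rw [Subsingleton.elim g 0, AddMonoidHom.range_zero, bot_inf_eq] at hgX
    exact hX0 hgX.symm
  refine hB.not_disjoint_range hr hφ
    (disjoint_iff.2 (eq_bot_of_forall_nsmul_eq_zero hG fun x ⟨hxφ, hxg⟩ hpx => ?_))
  exact AddSubgroup.disjoint_def.1 hφX hxφ (hgX ▸ ⟨hxg, mem_socleFiltration_zero.2 hpx⟩)

theorem surjective_of_forall_socleFiltration_le (hB : BassianFinite G) (hp : p.Prime)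
    (hG : ∀ x : G, ∃ n : ℕ, p ^ n • x = 0)
    (hdiv : ∀ n, socleFiltration p G 0 ≤ socleFiltration p G n) {φ : G →+ G}
    (hφ : Function.Injective φ) : Function.Surjective φ := by
  have hpG : Function.Surjective (nsmulAddMonoidHom p : G →+ G) :=
    surjective_of_forall_nsmul_eq_zero hG _ fun n x hx => by
      obtain ⟨-, u, hu⟩ :=
        mem_socleFiltration.1 (hdiv (n + 1) (mem_socleFiltration_zero.2 hx))
      exact ⟨u, by rw [← hu, pow_succ', mul_smul, nsmulAddMonoidHom_apply]⟩
  obtain ⟨r, hr⟩ := exists_leftInverse_of_surjective_nsmul hp hG hφ hpG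
  exact hB.surjective_of_leftInverse hr φ hφ

theorem mem_range_of_notMem_socleFiltration (hB : BassianFinite G) (hp : p.Prime)
    (hG : ∀ x : G, ∃ n : ℕ, p ^ n • x = 0) {φ : G →+ G} (hφ : Function.Injective φ) {n : ℕ}
    {y : G} (hy : y ∈ socleFiltration p G 0) (hyn : y ∉ socleFiltration p G n) : y ∈ φ.range := by
  obtain ⟨k, hk, hk_succ⟩ := Nat.exists_not_and_succ_of_not_zero_of_exists
    (p := (y ∉ socleFiltration p G ·)) (not_not.2 hy) ⟨n, hyn⟩
  rw [not_not] at hk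
  have hpy := mem_socleFiltration_zero.1 hy
  by_contra hyφ
  refine hB.not_disjoint_range_of_le_socleFiltration hp hG hφ (X := AddSubgroup.zmultiples y) ?_
    (AddSubgroup.zmultiples_le_of_mem hk) (disjoint_zmultiples_of_notMem hp hpy hk_succ)
    (disjoint_zmultiples_of_notMem hp hpy hyφ).symm
  intro hbot
  exact hyφ (AddSubgroup.zmultiples_eq_bot.1 hbot ▸ φ.range.zero_mem)

/-- Either every element of the socle has infinite height, and then `G` is divisible, or the
elements of finite height generate the socle. -/
theorem socleFiltration_zero_le_range (hB : BassianFinite G) (hp : p.Prime)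
    (hG : ∀ x : G, ∃ n : ℕ, p ^ n • x = 0) {φ : G →+ G} (hφ : Function.Injective φ) :
    socleFiltration p G 0 ≤ φ.range := by
  by_cases hdiv : ∀ n, socleFiltration p G 0 ≤ socleFiltration p G n
  · exact fun y _ => hB.surjective_of_forall_socleFiltration_le hp hG hdiv hφ y
  obtain ⟨n, hn⟩ := not_forall.1 hdiv
  obtain ⟨u, hu, hun⟩ := SetLike.not_le_iff_exists.1 hn
  intro y hy
  by_cases hyn : y ∈ socleFiltration p G n
  · have huyφ := hB.mem_range_of_notMem_socleFiltration hp hG hφ (add_mem hu hy)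
      (mt (AddSubgroup.add_mem_cancel_right _ hyn).1 hun)
    exact (AddSubgroup.add_mem_cancel_left _
      (hB.mem_range_of_notMem_socleFiltration hp hG hφ hu hun)).1 huyφ
  · exact hB.mem_range_of_notMem_socleFiltration hp hG hφ hy hyn

theorem relIndex_socleFiltration_succ_ne_zero (hB : BassianFinite G) (hp : p.Prime)
    (hG : ∀ x : G, ∃ n : ℕ, p ^ n • x = 0) (n : ℕ) :
    (socleFiltration p G (n + 1)).relIndex (socleFiltration p G n) ≠ 0 := by
  obtain ⟨X, hd, hX⟩ := exists_disjoint_sup_eq_of_nsmul_eq_zero hp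
    (fun x hx => (mem_socleFiltration.1 hx).1) (socleFiltration_succ_le (p := p) (G := G) n)
  have : Finite X := hB.finite_of_disjoint_socleFiltration hp hG (hX ▸ le_sup_left) hd
  rw [← hX, AddSubgroup.relIndex_sup_right]
  exact AddSubgroup.index_ne_zero_of_finite

theorem map_socleFiltration_eq (hB : BassianFinite G) (hp : p.Prime)
    (hG : ∀ x : G, ∃ n : ℕ, p ^ n • x = 0) {φ : G →+ G} (hφ : Function.Injective φ) (n : ℕ) :
    (socleFiltration p G n).map φ = socleFiltration p G n := by
  induction n with
  | zero =>
    refine le_antisymm (map_socleFiltration_le φ 0) fun y hy => ?_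
    obtain ⟨x, rfl⟩ := hB.socleFiltration_zero_le_range hp hG hφ hy
    refine ⟨x, mem_socleFiltration_zero.2 (hφ ?_), rfl⟩
    rw [map_nsmul, mem_socleFiltration_zero.1 hy, map_zero]
  | succ n ih =>
    exact map_eq_of_relIndex_ne_zero hφ ih (socleFiltration_succ_le n)
      (map_socleFiltration_le φ (n + 1)) (hB.relIndex_socleFiltration_succ_ne_zero hp hG n)

theorem coHopfian (hB : BassianFinite G) (hp : p.Prime)
    (hG : ∀ x : G, ∃ n : ℕ, p ^ n • x = 0) : CoHopfian G := by
  refine fun φ hφ => surjective_of_forall_nsmul_eq_zero hG φ fun n x hx => ?_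
  obtain ⟨y, hy, hyx⟩ : p ^ n • x ∈ (socleFiltration p G n).map φ := by
    rw [hB.map_socleFiltration_eq hp hG hφ]
    exact mem_socleFiltration.2 ⟨hx, x, rfl⟩
  obtain ⟨-, u, rfl⟩ := mem_socleFiltration.1 hy
  exact ⟨u, hyx⟩

end BassianFinite

end Primary

end

/-- For an abelian `p`-group `T`, the following are equivalent:
(a) `T` is Bassian-finite; (b) `T` is co-Hopfian; (c) `T` is relatively co-Hopfian. -/
theorem pGroup_bassianFinite_tfae (p : ℕ) (hp : p.Prime) (T : Type*) [AddCommGroup T]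
    (hT : ∀ x : T, ∃ n : ℕ, p ^ n • x = 0) :
    List.TFAE [BassianFinite T, CoHopfian T, RelativelyCoHopfian T] := by
  tfae_have 1 → 2 := fun hB => hB.coHopfian hp hT
  tfae_have 2 → 3 := CoHopfian.relativelyCoHopfian
  tfae_have 3 → 1 := RelativelyCoHopfian.bassianFinite
  tfae_finish
end

section
/- Suppose G = ⊕_{i∈I} A_i is an internal direct sum of abelian groups with each A_i ≠ 0. If G has finite injective rank, then the index set I is finite. -/
/-- An abelian group `G` has *finite injective rank* if an endomorphism `φ` of `G`
is injective exactly when the quotient `G / φ(G)` is finite. -/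
def FiniteInjectiveRank (G : Type*) [AddCommGroup G] : Prop :=
  ∀ φ : G →+ G, Function.Injective φ ↔ Finite (G ⧸ φ.range)

/-!
Finite injective rank passes to direct summands, hence to divisible subgroups, and it forces every
surjective endomorphism to be injective and every endomorphism of finite range to have no nonzero
fixed point.

Such a group `G` is torsion-free. Indeed, an element of order `p` that is not divisible by every
`p ^ k` yields a nonzero finite cyclic direct summand, the projection onto which has finite range.
Otherwise the `p`-primary component of `G` is divisible, and multiplication by `p` on it is
surjective but not injective.

Now let `G = ⨁ i, A i`. Where `A i` is not divisible, choose `n i ≠ 0` with `n i • A i ≠ A i`,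
and take any `n i ≠ 0` elsewhere. Multiplication by `n i` on each summand is an injective
endomorphism of `G`, so it has finite cokernel, and only finitely many `A i` are not divisible.
Each nonzero divisible `A i` contains a copy of `ℚ`, so `ℚ^(J)` embeds in `G`, where `J` indexes
the divisible summands. It is a direct summand of `G`, and for infinite `J` a shift of the
coordinates would be surjective without being injective.
-/

open Function DirectSum

section AbelianGroups

variable {G : Type*} [AddCommGroup G]

lemma exists_addCircle_hom_apply_ne_zero_of_notMem {N : AddSubgroup G} {x : G} (hx : x ∉ N) :
    ∃ f : G →+ AddCircle (1 : ℚ), (∀ z ∈ N, f z = 0) ∧ f x ≠ 0 := by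
  have hx' : QuotientAddGroup.mk' N x ≠ 0 := by simpa using hx
  obtain ⟨c, hc⟩ : ∃ c : (G ⧸ N) →+ AddCircle (1 : ℚ), c (QuotientAddGroup.mk' N x) ≠ 0 :=
    CharacterModule.exists_character_apply_ne_zero_of_ne_zero hx'
  refine ⟨c.comp (QuotientAddGroup.mk' N), fun z hz ↦ ?_, hc⟩
  have hz' : QuotientAddGroup.mk' N z = 0 := by simpa using hz
  rw [AddMonoidHom.comp_apply, hz', map_zero]

lemma mem_zmultiples_addCircle_of_addOrderOf_nsmul_eq_zero {u v : AddCircle (1 : ℚ)}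
    (hu : IsOfFinAddOrder u) (hv : addOrderOf u • v = 0) : v ∈ AddSubgroup.zmultiples u := by
  have hpos := hu.addOrderOf_pos
  have hsub : (AddSubgroup.zmultiples u : Set (AddCircle (1 : ℚ))) ⊆
      {w | addOrderOf u • w = 0} := by
    rintro _ ⟨m, rfl⟩
    simp [smul_comm _ m]
  have hcard : {w : AddCircle (1 : ℚ) | addOrderOf u • w = 0}.encard ≤
      (AddSubgroup.zmultiples u : Set (AddCircle (1 : ℚ))).encard := by
    have := hu.finite_zmultiples
    rw [← Set.Finite.cast_ncard_eq this, ← Nat.card_coe_set_eq]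
    refine (AddCircle.card_torsion_le_of_isSMulRegular 1 _ hpos.ne' ?_).trans_eq ?_
    · exact .of_right_eq_zero_of_smul fun _ ↦ by simp [hpos.ne']
    · exact congrArg _ (Nat.card_zmultiples u).symm
  have heq := ((AddCircle.finite_torsion (1 : ℚ) hpos).subset hsub).eq_of_subset_of_encard_le
    hsub hcard
  exact heq.symm.subset hv

lemma exists_finite_range_apply_eq_self {p k : ℕ} (hp : p.Prime) {y : G}
    (hy : p ^ (k + 1) • y = 0) (hndvd : ∀ z : G, p ^ (k + 1) • z ≠ p ^ k • y) :
    ∃ φ : G →+ G, Finite φ.range ∧ φ y = y := by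
  have : Fact p.Prime := ⟨hp⟩
  obtain ⟨f, hf, hfy⟩ := exists_addCircle_hom_apply_ne_zero_of_notMem
    (N := (nsmulAddMonoidHom (p ^ (k + 1))).range) (x := p ^ k • y) (by simpa using hndvd)
  replace hf (z : G) : p ^ (k + 1) • f z = 0 := by
    rw [← map_nsmul]
    exact hf _ ⟨z, rfl⟩
  have hord : addOrderOf (f y) = p ^ (k + 1) :=
    addOrderOf_eq_prime_pow (by rwa [← map_nsmul]) (hf y)
  have hfin : IsOfFinAddOrder (f y) := addOrderOf_pos_iff.1 (hord ▸ pow_pos hp.pos _)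
  have hmem (z : G) : f z ∈ AddSubgroup.zmultiples (f y) :=
    mem_zmultiples_addCircle_of_addOrderOf_nsmul_eq_zero hfin (hord ▸ hf z)
  let C := AddSubgroup.zmultiples (f y)
  have : Finite C := hfin.finite_zmultiples
  let gen : C := ⟨f y, hmem y⟩
  have hgen (x : C) : x ∈ AddSubgroup.zmultiples gen := by
    obtain ⟨_, m, rfl⟩ := x
    exact ⟨m, rfl⟩
  have hdvd : addOrderOf y ∣ addOrderOf gen := by
    rw [← AddSubgroup.addOrderOf_coe gen, hord]
    exact addOrderOf_dvd_of_nsmul_eq_zero hy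
  let σ : C →+ G := addMonoidHomOfForallMemZMultiples hgen hdvd
  refine ⟨σ.comp (f.codRestrict C hmem), ?_, addMonoidHomOfForallMemZMultiples_apply_gen hgen hdvd⟩
  refine ((Set.finite_range σ).subset ?_).to_subtype
  exact Set.range_comp_subset_range (f.codRestrict C hmem) σ

lemma nsmul_surjective_of_prime_nsmul_surjective {p : ℕ} (hp : p.Prime)
    (htors : ∀ x : G, ∃ k : ℕ, p ^ k • x = 0) (hsurj : Surjective fun x : G ↦ p • x) {n : ℕ}
    (hn : n ≠ 0) : Surjective fun x : G ↦ n • x := by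
  induction n using Nat.recOnMul with
  | zero => exact absurd rfl hn
  | one => simpa using! surjective_id
  | prime q hq =>
    rcases eq_or_ne q p with rfl | hqp
    · exact hsurj
    · intro x
      obtain ⟨k, hk⟩ := htors x
      have hcop : q.Coprime (addOrderOf x) :=
        (((Nat.coprime_primes hq hp).2 hqp).pow_right k).coprime_dvd_right
          (addOrderOf_dvd_of_nsmul_eq_zero hk)
      obtain ⟨m, hm⟩ := exists_nsmul_eq_self_of_coprime hcop
      exact ⟨m • x, (smul_comm q m x).trans hm⟩
  | mul a b iha ihb =>
    simpa only [mul_smul] using! (iha (left_ne_zero_of_mul hn)).comp (ihb (right_ne_zero_of_mul hn))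

lemma exists_injective_addMonoidHom_rat (A : Type*) [AddCommGroup A] [IsAddTorsionFree A]
    [DivisibleBy A ℤ] [Nontrivial A] : ∃ u : ℚ →+ A, Injective u := by
  obtain ⟨a, ha⟩ := exists_ne (0 : A)
  obtain ⟨u, hu⟩ := (Module.Baer.of_divisible A).extension_property_addMonoidHom
    (Int.castAddHom ℚ) Int.cast_injective (zmultiplesHom A a)
  refine ⟨u, (injective_iff_map_eq_zero u).2 fun q hq ↦ ?_⟩
  have hnum : q.num • a = 0 := calc
    q.num • a = u (q.num : ℚ) := (DFunLike.congr_fun hu q.num).symm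
    _ = u (q.den • q) := by rw [nsmul_eq_mul, Rat.den_mul_eq_num]
    _ = 0 := by rw [map_nsmul, hq, smul_zero]
  exact Rat.num_eq_zero.1 ((IsAddTorsionFree.zsmul_eq_zero_iff_left ha).1 hnum)

end AbelianGroups

section DirectSums

variable {I : Type*} {A B : I → Type*} [∀ i, AddCommGroup (A i)] [∀ i, AddCommGroup (B i)]

lemma finite_setOf_not_surjective_of_finite_quotient_range_map (f : ∀ i, A i →+ B i)
    [Finite ((⨁ i, B i) ⧸ (DirectSum.map f).range)] : {i | ¬ Surjective (f i)}.Finite := by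
  classical
  have hex (i : {i | ¬ Surjective (f i)}) : ∃ b, ∀ a, f i a ≠ b := by
    simpa [Surjective] using i.2
  choose b hb using hex
  refine Set.finite_coe_iff.1 (Finite.of_injective (fun i ↦
    (QuotientAddGroup.mk (of B i (b i)) : (⨁ i, B i) ⧸ (DirectSum.map f).range)) ?_)
  intro i j hij
  by_contra hne
  obtain ⟨x, hx⟩ := QuotientAddGroup.eq.1 hij.symm
  refine hb i (x i) ?_
  calc f i (x i) = (-of B j (b j) + of B i (b i)) i := by rw [← hx, map_apply]
    _ = -of B j (b j) i + of B i (b i) i := rfl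
    _ = b i := by
      rw [of_eq_same, of_eq_of_ne _ _ _ (Subtype.coe_ne_coe.2 hne), neg_zero, zero_add]

lemma exists_injective_finsupp_to_directSum {M : Type*} [AddCommGroup M] (s : Set I)
    (u : ∀ i : s, M →+ A i) (hu : ∀ i, Injective (u i)) :
    ∃ f : (s →₀ M) →+ ⨁ i, A i, Injective f := by
  classical
  let f : (s →₀ M) →+ ⨁ i, A i := Finsupp.liftAddHom fun i ↦ (of A i).comp (u i)
  have hf (x : s →₀ M) (i : s) : f x i = u i (x i) := by
    induction x using Finsupp.induction_linear with
    | zero => simp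
    | add x y hx hy => simp [hx, hy]
    | single j m =>
      rcases eq_or_ne i j with rfl | hij
      · simp [f, of_eq_same]
      · simp [f, of_eq_of_ne _ _ _ (Subtype.coe_ne_coe.2 hij), hij]
  refine ⟨f, fun x y hxy ↦ Finsupp.ext fun i ↦ hu i ?_⟩
  rw [← hf, ← hf, hxy]

end DirectSums

namespace FiniteInjectiveRank

variable {G : Type*} [AddCommGroup G]

lemma injective_of_surjective (h : FiniteInjectiveRank G) {φ : G →+ G} (hφ : Surjective φ) :
    Injective φ := by
  rw [h, AddMonoidHom.range_eq_top.2 hφ]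
  infer_instance

lemma of_leftInverse (h : FiniteInjectiveRank G) {A : Type*} [AddCommGroup A] (i : A →+ G)
    (r : G →+ A) (hri : LeftInverse r i) : FiniteInjectiveRank A := by
  intro φ
  -- `φ` on the summand `A`, the identity on the complement `ker r`.
  let Φ : G →+ G := .id G - i.comp r + (i.comp φ).comp r
  have hΦ (g : G) : Φ g = g - i (r g) + i (φ (r g)) := rfl
  have hrΦ (g : G) : r (Φ g) = φ (r g) := by simp [hΦ, hri _]
  have hΦi (a : A) : Φ (i a) = i (φ a) := by simp [hΦ, hri _]
  have hinj : Injective φ ↔ Injective Φ := by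
    refine ⟨fun hφ ↦ (injective_iff_map_eq_zero Φ).2 fun g hg ↦ ?_, fun hinj ↦ ?_⟩
    · have hrg : r g = 0 := hφ (by rw [← hrΦ, hg, map_zero, map_zero])
      simpa [hΦ, hrg] using hg
    · refine Injective.of_comp (f := i) ?_
      simpa only [comp_def, hΦi] using hinj.comp hri.injective
  have hrange : Φ.range = φ.range.comap r := by
    ext g
    refine ⟨?_, fun ⟨a, ha⟩ ↦ ⟨g - i (r g) + i a, by simp [hΦ, hri _, ha]⟩⟩
    rintro ⟨g, rfl⟩
    exact ⟨r g, (hrΦ g).symm⟩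
  rw [hinj, h Φ, ← AddSubgroup.finiteIndex_iff_finite_quotient,
    ← AddSubgroup.finiteIndex_iff_finite_quotient, AddSubgroup.finiteIndex_iff,
    AddSubgroup.finiteIndex_iff, hrange, AddSubgroup.index_comap_of_surjective _ hri.surjective]

lemma of_injective_of_divisible (h : FiniteInjectiveRank G) {D : Type*} [AddCommGroup D]
    [DivisibleBy D ℤ] (i : D →+ G) (hi : Injective i) : FiniteInjectiveRank D := by
  obtain ⟨r, hr⟩ := (Module.Baer.of_divisible D).extension_property_addMonoidHom i hi (.id D)
  exact h.of_leftInverse i r (DFunLike.congr_fun hr)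

lemma eq_zero_of_apply_eq_self (h : FiniteInjectiveRank G) (φ : G →+ G) [Finite φ.range] {y : G}
    (hy : φ y = y) : y = 0 := by
  let ψ : G →+ G := .id G - φ
  have hψ (g : G) : ψ g = g - φ g := rfl
  have hinj : Injective ψ := by
    refine (h ψ).2 (Finite.of_surjective (fun v : φ.range ↦ (v : G ⧸ ψ.range)) fun z ↦ ?_)
    obtain ⟨g, rfl⟩ := QuotientAddGroup.mk_surjective z
    exact ⟨⟨φ g, g, rfl⟩, QuotientAddGroup.eq.2 ⟨g, by rw [hψ]; abel⟩⟩
  exact hinj (by rw [hψ, hy, sub_self, map_zero])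

lemma exists_prime_pow_nsmul_eq (h : FiniteInjectiveRank G) {p : ℕ} (hp : p.Prime) {x : G}
    (hx : p • x = 0) (k : ℕ) : ∃ y, p ^ k • y = x := by
  induction k with
  | zero => exact ⟨x, by simp⟩
  | succ k ih =>
    obtain ⟨y, rfl⟩ := ih
    by_contra! hndvd
    obtain ⟨φ, _, hφy⟩ :=
      exists_finite_range_apply_eq_self hp (by rwa [pow_succ', mul_smul]) hndvd
    have hy : y = 0 := h.eq_zero_of_apply_eq_self φ hφy
    exact hndvd 0 (by simp [hy])

lemma exists_prime_nsmul_eq (h : FiniteInjectiveRank G) {p : ℕ} (hp : p.Prime) {m : ℕ} {x : G}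
    (hx : p ^ m • x = 0) : ∃ y, p • y = x := by
  induction m generalizing x with
  | zero => exact ⟨0, by simpa using hx.symm⟩
  | succ m ih =>
    obtain ⟨y, hy⟩ := h.exists_prime_pow_nsmul_eq hp (x := p ^ m • x)
      (by rwa [← mul_smul, ← pow_succ']) (m + 1)
    obtain ⟨z, hz⟩ := ih (x := x - p • y) (by rw [smul_sub, ← mul_smul, ← pow_succ, hy, sub_self])
    exact ⟨z + y, by rw [smul_add, hz, sub_add_cancel]⟩

lemma eq_zero_of_prime_nsmul_eq_zero (h : FiniteInjectiveRank G) {p : ℕ} (hp : p.Prime) {x : G}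
    (hx : p • x = 0) : x = 0 := by
  let T := AddCommGroup.primaryComponent G p
  have hsurj : Surjective fun t : T ↦ p • t := by
    rintro ⟨t, k, hk⟩
    obtain ⟨s, hs⟩ := h.exists_prime_nsmul_eq hp hk
    exact ⟨⟨s, k + 1, by rw [pow_succ, mul_smul, hs, hk]⟩, Subtype.ext hs⟩
  let : DivisibleBy T ℕ := divisibleByOfSMulRightSurj T ℕ
    (nsmul_surjective_of_prime_nsmul_surjective hp
      (fun t ↦ t.2.imp fun k hk ↦ Subtype.ext hk) hsurj)
  let : DivisibleBy T ℤ := AddGroup.divisibleByIntOfDivisibleByNat T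
  have hT : FiniteInjectiveRank T := h.of_injective_of_divisible T.subtype T.subtype_injective
  have hinj := hT.injective_of_surjective (φ := nsmulAddMonoidHom p) hsurj
  have hxT : (⟨x, 1, by simpa using hx⟩ : T) = 0 := hinj (Subtype.ext (by simpa using hx))
  exact congrArg Subtype.val hxT

lemma isAddTorsionFree (h : FiniteInjectiveRank G) : IsAddTorsionFree G := by
  refine .of_not_isOfFinAddOrder fun a ha hfin ↦ ?_
  obtain ⟨p, hp, hpa⟩ := Nat.exists_prime_and_dvd (mt AddMonoid.addOrderOf_eq_one_iff.1 ha)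
  have hord := addOrderOf_nsmul_addOrderOf_sub hfin.addOrderOf_pos.ne' hpa
  have hzero : (addOrderOf a / p) • a = 0 :=
    h.eq_zero_of_prime_nsmul_eq_zero hp (addOrderOf_dvd_iff_nsmul_eq_zero.1 hord.dvd)
  rw [hzero, addOrderOf_zero] at hord
  exact hp.ne_one hord.symm

lemma finite_of_finsupp {ι M : Type*} [AddCommGroup M] [Nontrivial M]
    (h : FiniteInjectiveRank (ι →₀ M)) : Finite ι := by
  by_contra! hι
  obtain ⟨e⟩ : Nonempty (Option ι ≃ ι) := Cardinal.eq.1 (by simp)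
  let shift : ι → ι := e ∘ some
  have hshift : Injective shift := e.injective.comp (Option.some_injective ι)
  let φ : (ι →₀ M) →+ (ι →₀ M) := Finsupp.comapDomain.addMonoidHom hshift
  have hφ : Surjective φ := fun x ↦ ⟨x.mapDomain shift, Finsupp.comapDomain_mapDomain _ hshift x⟩
  obtain ⟨m, hm⟩ := exists_ne (0 : M)
  have hker : φ (Finsupp.single (e none) m) = 0 := by
    ext i
    simp [φ, shift]
  exact hm (Finsupp.single_eq_zero.1 (h.injective_of_surjective hφ (hker.trans (map_zero φ).symm)))

section DirectSum

variable {I : Type*} {A : I → Type*} [∀ i, AddCommGroup (A i)]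

lemma finite_setOf_not_divisible (h : FiniteInjectiveRank (⨁ i, A i)) :
    {i | ¬ Nonempty (DivisibleBy (A i) ℤ)}.Finite := by
  classical
  have := h.isAddTorsionFree
  have hex (i : I) : ∃ n : ℤ, n ≠ 0 ∧ ((Surjective fun a : A i ↦ n • a) →
      Nonempty (DivisibleBy (A i) ℤ)) := by
    by_contra! hcon
    exact (hcon 1 one_ne_zero).2.false (divisibleByOfSMulRightSurj _ _ fun hn ↦ (hcon _ hn).1)
  choose n hn hdiv using hex
  let f (i : I) : A i →+ A i := zsmulAddGroupHom (n i)
  have hinj : Injective (DirectSum.map f) := (DirectSum.map_injective f).2 fun i ↦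
    have := (of_injective (β := A) i).isAddTorsionFree (of A i)
    zsmul_right_injective (hn i)
  have := (h _).1 hinj
  exact (finite_setOf_not_surjective_of_finite_quotient_range_map f).subset
    fun i hi hs ↦ hi (hdiv i hs)

lemma finite_setOf_divisible [∀ i, Nontrivial (A i)] (h : FiniteInjectiveRank (⨁ i, A i)) :
    {i | Nonempty (DivisibleBy (A i) ℤ)}.Finite := by
  classical
  have := h.isAddTorsionFree
  set s := {i | Nonempty (DivisibleBy (A i) ℤ)}
  have hrat (i : s) : ∃ u : ℚ →+ A i, Injective u :=
    let ⟨_⟩ := i.2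
    have := (of_injective (β := A) i).isAddTorsionFree (of A i)
    exists_injective_addMonoidHom_rat (A i)
  choose u hu using hrat
  obtain ⟨f, hf⟩ := exists_injective_finsupp_to_directSum s u hu
  let : DivisibleBy (s →₀ ℚ) ℤ := divisibleByOfSMulRightSurj _ _ fun {n} hn x ↦
    ⟨(n : ℚ)⁻¹ • x, by simp [← Int.cast_smul_eq_zsmul ℚ, smul_smul, hn]⟩
  have : Finite s := (h.of_injective_of_divisible f hf).finite_of_finsupp
  exact s.toFinite

lemma finite_of_directSum [∀ i, Nontrivial (A i)] (h : FiniteInjectiveRank (⨁ i, A i)) :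
    Finite I := by
  refine Set.finite_univ_iff.1 ?_
  exact (h.finite_setOf_divisible.union h.finite_setOf_not_divisible).subset fun i _ ↦ em _

end DirectSum

end FiniteInjectiveRank

/-- If `G = ⨁_{i ∈ I} A i` is an internal direct sum of nonzero subgroups and `G` has
finite injective rank, then the index set `I` is finite. -/
theorem finite_index_of_finiteInjectiveRank (G : Type*) [AddCommGroup G]
    {I : Type*} [DecidableEq I] (A : I → AddSubgroup G)
    (hinternal : DirectSum.IsInternal A) (hne : ∀ i, A i ≠ ⊥)
    (h : FiniteInjectiveRank G) : Finite I := by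
  have (i : I) : Nontrivial (A i) := (A i).nontrivial_iff_ne_bot.2 (hne i)
  let e : (⨁ i, A i) ≃+ G := .ofBijective (DirectSum.coeAddMonoidHom A) hinternal
  have hsum : FiniteInjectiveRank (⨁ i, A i) :=
    h.of_leftInverse e.toAddMonoidHom e.symm.toAddMonoidHom e.symm_apply_apply
  exact hsum.finite_of_directSum
end
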